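/- arXiv:2208.11938 — 2 statements merged into one kernel-verified Lean document; each statement's English description precedes it below -/
import Mathlib

section
/- Let V be a finite-dimensional complex vector space and W a finite subgroup of GL(V) generated by its reflections, all of which have order 2. Let W₁, W₂ be parabolic subgroups of W, let Rᵢ be the set of reflections of W lying in Wᵢ, and let uᵢ = Σ_{s ∈ Rᵢ} s in the group ring ℤ[W] (i = 1, 2). Then u₁u₂ = u₂u₁ if and only if s₁s₂ = s₂s₁ for every s₁ ∈ R₁ \ R₂ and every s₂ ∈ R₂ \ R₁. -/
open Module

/-- A reflection: a nontrivial invertible linear endomorphism whose fixed subspace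
`Ker(w - 1)` has codimension 1. -/
def IsReflection {V : Type*} [AddCommGroup V] [Module ℂ V]
    (w : (Module.End ℂ V)ˣ) : Prop :=
  w ≠ 1 ∧ finrank ℂ (LinearMap.ker ((w : Module.End ℂ V) - 1)) + 1 = finrank ℂ V

open scoped Classical in
/-- Sums of finite sets of group elements commute in the group ring only if every product in one
order is also a product in the other order. -/
theorem exists_mul_eq_of_commute_sum_of {G : Type*} [Group G] {A B : Finset G}
    (h : Commute (∑ s ∈ A, MonoidAlgebra.of ℤ G s) (∑ t ∈ B, MonoidAlgebra.of ℤ G t))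
    {s t : G} (hs : s ∈ A) (ht : t ∈ B) : ∃ s' ∈ A, ∃ t' ∈ B, s * t = t' * s' := by
  by_contra! hne
  have h' := congrArg (fun f : MonoidAlgebra ℤ G => f.coeff (s * t)) h.eq
  simp only [Finset.sum_mul_sum, MonoidAlgebra.of_apply, MonoidAlgebra.single_mul_single,
    mul_one, MonoidAlgebra.coeff_sum, Finsupp.finsetSum_apply, MonoidAlgebra.coeff_single,
    Finsupp.single_apply] at h'
  have hzero : ∑ i ∈ B, ∑ j ∈ A, (if i * j = s * t then (1 : ℤ) else 0) = 0 :=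
    Finset.sum_eq_zero fun i hi => Finset.sum_eq_zero fun j hj =>
      if_neg fun hij => hne j hj i hi hij.symm
  have hpos : 0 < ∑ i ∈ A, ∑ j ∈ B, (if i * j = s * t then (1 : ℤ) else 0) := by
    refine Finset.sum_pos' (fun i _ => Finset.sum_nonneg fun j _ => by split_ifs <;> simp)
      ⟨s, hs, Finset.sum_pos' (fun j _ => by split_ifs <;> simp) ⟨t, ht, by simp⟩⟩
  omega

/-- The sum of a finite set stable under conjugation by `g` commutes with `g`. -/
theorem commute_of_sum_of {G : Type*} [Group G] {A : Finset G} {g : G}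
    (h : ∀ s ∈ A, g * s * g⁻¹ ∈ A) :
    Commute (MonoidAlgebra.of ℤ G g) (∑ s ∈ A, MonoidAlgebra.of ℤ G s) := by
  have hinj : Set.InjOn (fun s => g * s * g⁻¹) (A : Set G) := fun a _ b _ hab => by simpa using hab
  have hsurj := Finset.surjOn_of_injOn_of_card_le (fun s => g * s * g⁻¹) h hinj le_rfl
  rw [commute_iff_eq, Finset.mul_sum, Finset.sum_mul]
  refine Finset.sum_bij (fun s _ => g * s * g⁻¹) h (fun a ha b hb => hinj ha hb)
    (fun b hb => ?_) fun s _ => ?_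
  · obtain ⟨a, ha, rfl⟩ := hsurj hb
    exact ⟨a, ha, rfl⟩
  · rw [← map_mul, ← map_mul, inv_mul_cancel_right]

/-- Conjugation preserves reflections. -/
theorem IsReflection.conj {V : Type*} [AddCommGroup V] [Module ℂ V] {s : (Module.End ℂ V)ˣ}
    (hs : IsReflection s) (g : (Module.End ℂ V)ˣ) : IsReflection (g * s * g⁻¹) := by
  refine ⟨fun h => hs.1 (conj_eq_one_iff.mp h), ?_⟩
  rw [← hs.2]
  congr 1
  let e := LinearMap.GeneralLinearGroup.toLinearEquiv g
  rw [← LinearEquiv.finrank_map_eq e (LinearMap.ker ((s : Module.End ℂ V) - 1))]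
  suffices h : LinearMap.ker (((g * s * g⁻¹ : (Module.End ℂ V)ˣ) : Module.End ℂ V) - 1) =
      (LinearMap.ker ((s : Module.End ℂ V) - 1)).map (e : V →ₗ[ℂ] V) by rw [h]
  ext v
  have hv : ∀ x, (g : Module.End ℂ V) (((g⁻¹ : (Module.End ℂ V)ˣ) : Module.End ℂ V) x) = x :=
    fun x => by rw [← Module.End.mul_apply, Units.mul_inv, Module.End.one_apply]
  have hv' : ∀ x, ((g⁻¹ : (Module.End ℂ V)ˣ) : Module.End ℂ V) ((g : Module.End ℂ V) x) = x :=
    fun x => by rw [← Module.End.mul_apply, Units.inv_mul, Module.End.one_apply]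
  simp only [LinearMap.mem_ker, LinearMap.sub_apply, Module.End.one_apply, sub_eq_zero,
    Units.val_mul, Module.End.mul_apply, Submodule.mem_map]
  constructor
  · intro h
    refine ⟨((g⁻¹ : (Module.End ℂ V)ˣ) : Module.End ℂ V) v, ?_, hv v⟩
    rw [← hv' ((s : Module.End ℂ V) _), h]
  · rintro ⟨y, hy, rfl⟩
    change (g : Module.End ℂ V) ((s : Module.End ℂ V)
      (((g⁻¹ : (Module.End ℂ V)ˣ) : Module.End ℂ V) ((g : Module.End ℂ V) y))) =
      (g : Module.End ℂ V) y
    rw [hv', hy]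

/-- A vector moved by a reflection `s` determines its root line, which contains every
`s x - x`. -/
theorem IsReflection.exists_smul_eq {V : Type*} [AddCommGroup V] [Module ℂ V]
    [FiniteDimensional ℂ V] {s : (Module.End ℂ V)ˣ} (hs : IsReflection s) {v : V}
    (hv : (s : Module.End ℂ V) v ≠ v) (x : V) :
    ∃ c : ℂ, (s : Module.End ℂ V) x = x + c • ((s : Module.End ℂ V) v - v) := by
  have hrank := LinearMap.finrank_range_add_finrank_ker ((s : Module.End ℂ V) - 1)
  have hone : finrank ℂ (LinearMap.range ((s : Module.End ℂ V) - 1)) = 1 := by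
    have := hs.2
    omega
  obtain ⟨c, hc⟩ := (finrank_eq_one_iff_of_nonzero'
    (⟨(s : Module.End ℂ V) v - v, v, rfl⟩ : LinearMap.range ((s : Module.End ℂ V) - 1))
    (Subtype.coe_ne_coe.mp (sub_ne_zero.mpr hv))).mp hone ⟨(s : Module.End ℂ V) x - x, x, rfl⟩
  refine ⟨c, ?_⟩
  have hc' : c • ((s : Module.End ℂ V) v - v) = (s : Module.End ℂ V) x - x :=
    congrArg Subtype.val hc
  rw [hc']
  abel

/-- Two involutive reflections whose product has finite order are equal as soon as they move some
vector in the same way. -/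
theorem IsReflection.eq_of_apply_eq {V : Type*} [AddCommGroup V] [Module ℂ V]
    [FiniteDimensional ℂ V] {s t : (Module.End ℂ V)ˣ} (hs : IsReflection s) (ht : IsReflection t)
    (hs2 : s * s = 1) (ht2 : t * t = 1) (hfin : IsOfFinOrder (s * t)) {v : V}
    (hst : (s : Module.End ℂ V) v = (t : Module.End ℂ V) v)
    (hv : (s : Module.End ℂ V) v ≠ v) : s = t := by
  have hss : ∀ x, (s : Module.End ℂ V) ((s : Module.End ℂ V) x) = x := fun x => by
    rw [← Module.End.mul_apply, ← Units.val_mul, hs2, Units.val_one, Module.End.one_apply]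
  have htt : ∀ x, (t : Module.End ℂ V) ((t : Module.End ℂ V) x) = x := fun x => by
    rw [← Module.End.mul_apply, ← Units.val_mul, ht2, Units.val_one, Module.End.one_apply]
  set β := (s : Module.End ℂ V) v - v with hβ
  have hβ0 : β ≠ 0 := sub_ne_zero.mpr hv
  have hsβ : (s : Module.End ℂ V) β = -β := by rw [hβ, map_sub, hss]; abel
  have htβ : (t : Module.End ℂ V) β = -β := by rw [hβ, hst, map_sub, htt]; abel
  obtain ⟨n, hn, hpow⟩ := isOfFinOrder_iff_pow_eq_one.mp hfin
  ext x
  obtain ⟨a, ha⟩ := hs.exists_smul_eq hv x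
  obtain ⟨b, hb⟩ := ht.exists_smul_eq (hst ▸ hv) x
  rw [← hst] at hb
  rw [← hβ] at ha hb
  have hiter : ∀ k : ℕ, (((s * t) ^ k : (Module.End ℂ V)ˣ) : Module.End ℂ V) x =
      x + ((k : ℂ) * (a - b)) • β := by
    intro k
    induction k with
    | zero => simp
    | succ k ih =>
      rw [pow_succ', Units.val_mul, Module.End.mul_apply, ih, Units.val_mul, Module.End.mul_apply]
      simp only [map_add, map_smul, hsβ, htβ, ha, hb, map_neg]
      push_cast
      module
  have h1 := hiter n
  rw [hpow, Units.val_one, Module.End.one_apply, left_eq_add, smul_eq_zero, mul_eq_zero,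
    Nat.cast_eq_zero, sub_eq_zero] at h1
  obtain (h1 | h1) | h1 := h1
  · omega
  · rw [ha, hb, h1]
  · exact absurd h1 hβ0

/-- If `s * t = t' * s'` for involutive reflections of a finite group with `s ≠ s'`, then `t` fixes
every vector fixed by both `s` and `s'`. -/
theorem IsReflection.apply_eq_of_mul_eq_mul {V : Type*} [AddCommGroup V] [Module ℂ V]
    [FiniteDimensional ℂ V] {W : Subgroup (Module.End ℂ V)ˣ}
    (hW : (W : Set (Module.End ℂ V)ˣ).Finite) {s s' t t' : (Module.End ℂ V)ˣ}
    (hsW : s ∈ W) (htW : t ∈ W) (htW' : t' ∈ W) (ht : IsReflection t) (ht' : IsReflection t')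
    (hs2 : s * s = 1) (ht2 : t * t = 1) (ht2' : t' * t' = 1) (hmul : s * t = t' * s')
    (hne : s ≠ s') {v : V} (hv : (s : Module.End ℂ V) v = v) (hv' : (s' : Module.End ℂ V) v = v) :
    (t : Module.End ℂ V) v = v := by
  by_contra hmoved
  have hinv : s⁻¹ = s := inv_eq_of_mul_eq_one_left hs2
  have hqW : s * t' * s⁻¹ ∈ W := W.mul_mem (W.mul_mem hsW htW') (W.inv_mem hsW)
  have hfin : IsOfFinOrder (t * (s * t' * s⁻¹)) := by
    have : Finite W := hW
    exact Submonoid.isOfFinOrder_coe.mpr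
      (isOfFinOrder_of_finite (⟨_, W.mul_mem htW hqW⟩ : W))
  have hq2 : s * t' * s⁻¹ * (s * t' * s⁻¹) = 1 := by
    rw [conj_mul, ht2', mul_one, mul_inv_cancel]
  have htv : (t : Module.End ℂ V) v = ((s * t' * s⁻¹ : (Module.End ℂ V)ˣ) : Module.End ℂ V) v := by
    have htmul : t = s * t' * s' := by rw [mul_assoc, ← hmul, ← mul_assoc, hs2, one_mul]
    rw [htmul, hinv]
    simp only [Units.val_mul, Module.End.mul_apply, hv, hv']
  have heq := ht.eq_of_apply_eq (ht'.conj s) ht2 hq2 hfin htv hmoved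
  apply hne
  rw [heq, hinv, ← mul_assoc, ← mul_assoc, hs2, one_mul] at hmul
  exact mul_left_cancel hmul

/-- for two parabolic subgroups `W₁, W₂` of a finite complex 2-reflection
group `W`, the sums of reflections `u₁, u₂ ∈ ℤ[W]` commute if and only if every
reflection of `R₁ \ R₂` commutes with every reflection of `R₂ \ R₁`. -/
theorem sums_of_reflections_commute_iff
    {V : Type*} [AddCommGroup V] [Module ℂ V] [FiniteDimensional ℂ V]
    (W W₁ W₂ : Subgroup (Module.End ℂ V)ˣ)
    (hWfin : (W : Set (Module.End ℂ V)ˣ).Finite)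
    (R : Set (Module.End ℂ V)ˣ)
    (hR : R = {w : (Module.End ℂ V)ˣ | w ∈ W ∧ IsReflection w})
    (hgen : Subgroup.closure R = W)
    (horder : ∀ w ∈ R, w * w = 1)
    (R₁ R₂ : Set (Module.End ℂ V)ˣ)
    (hR₁ : R₁ = R ∩ (W₁ : Set (Module.End ℂ V)ˣ))
    (hR₂ : R₂ = R ∩ (W₂ : Set (Module.End ℂ V)ˣ))
    (hpar₁ : ∃ U : Submodule ℂ V, ∀ w : (Module.End ℂ V)ˣ,
      w ∈ W₁ ↔ w ∈ W ∧ ∀ v ∈ U, (w : Module.End ℂ V) v = v)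
    (hpar₂ : ∃ U : Submodule ℂ V, ∀ w : (Module.End ℂ V)ˣ,
      w ∈ W₂ ↔ w ∈ W ∧ ∀ v ∈ U, (w : Module.End ℂ V) v = v)
    (hStein₁ : ∀ w : (Module.End ℂ V)ˣ, w ∈ W₁ ↔ w ∈ W ∧
      ∀ v ∈ ⨅ s ∈ R₁, LinearMap.ker ((s : Module.End ℂ V) - 1),
        (w : Module.End ℂ V) v = v)
    (hStein₂ : ∀ w : (Module.End ℂ V)ˣ, w ∈ W₂ ↔ w ∈ W ∧
      ∀ v ∈ ⨅ s ∈ R₂, LinearMap.ker ((s : Module.End ℂ V) - 1),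
        (w : Module.End ℂ V) v = v)
    (hfin₁ : R₁.Finite) (hfin₂ : R₂.Finite)
    (u₁ u₂ : MonoidAlgebra ℤ (Module.End ℂ V)ˣ)
    (hu₁ : u₁ = ∑ s ∈ hfin₁.toFinset, MonoidAlgebra.of ℤ (Module.End ℂ V)ˣ s)
    (hu₂ : u₂ = ∑ s ∈ hfin₂.toFinset, MonoidAlgebra.of ℤ (Module.End ℂ V)ˣ s) :
    u₁ * u₂ = u₂ * u₁ ↔
      ∀ s₁ ∈ R₁ \ R₂, ∀ s₂ ∈ R₂ \ R₁, s₁ * s₂ = s₂ * s₁ := by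
  classical
  have hRW : ∀ {w}, w ∈ R → w ∈ W ∧ IsReflection w := fun h => by rwa [hR] at h
  have hconj : ∀ {w g}, w ∈ R → g ∈ W → g * w * g⁻¹ ∈ R := fun hw hg => by
    rw [hR]
    exact ⟨W.mul_mem (W.mul_mem hg (hRW hw).1) (W.inv_mem hg), (hRW hw).2.conj _⟩
  -- A product of two reflections determines its factor in each parabolic subgroup.
  have hunique : ∀ (W' : Subgroup (Module.End ℂ V)ˣ) (R' : Set (Module.End ℂ V)ˣ),
      R' = R ∩ (W' : Set (Module.End ℂ V)ˣ) →
      (∀ w : (Module.End ℂ V)ˣ, w ∈ W' ↔ w ∈ W ∧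
        ∀ v ∈ ⨅ s ∈ R', LinearMap.ker ((s : Module.End ℂ V) - 1),
          (w : Module.End ℂ V) v = v) →
      ∀ s ∈ R', ∀ s' ∈ R', ∀ t ∈ R, t ∉ R' → ∀ t' ∈ R, s * t = t' * s' → s = s' := by
    intro W' R' hR' hStein s hs s' hs' t ht htR' t' ht' hmul
    by_contra hne
    have hsR : s ∈ R := (hR' ▸ hs : s ∈ R ∩ (W' : Set (Module.End ℂ V)ˣ)).1
    refine htR' (hR' ▸ ⟨ht, (hStein t).mpr ⟨(hRW ht).1, fun v hv => ?_⟩⟩)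
    simp only [Submodule.mem_iInf, LinearMap.mem_ker, LinearMap.sub_apply, Module.End.one_apply,
      sub_eq_zero] at hv
    exact IsReflection.apply_eq_of_mul_eq_mul hWfin (hRW hsR).1 (hRW ht).1 (hRW ht').1 (hRW ht).2
      (hRW ht').2 (horder s hsR) (horder t ht) (horder t' ht') hmul hne (hv s hs) (hv s' hs')
  have hmem₁ : ∀ {w}, w ∈ R₁ ↔ w ∈ R ∧ w ∈ W₁ := fun {w} => by rw [hR₁]; rfl
  have hmem₂ : ∀ {w}, w ∈ R₂ ↔ w ∈ R ∧ w ∈ W₂ := fun {w} => by rw [hR₂]; rfl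
  set A := hfin₁.toFinset \ hfin₂.toFinset with hA
  set B := hfin₂.toFinset \ hfin₁.toFinset with hB
  set C := hfin₁.toFinset ∩ hfin₂.toFinset with hC
  set a := ∑ s ∈ A, MonoidAlgebra.of ℤ (Module.End ℂ V)ˣ s with ha
  set b := ∑ s ∈ B, MonoidAlgebra.of ℤ (Module.End ℂ V)ˣ s with hb
  set c := ∑ s ∈ C, MonoidAlgebra.of ℤ (Module.End ℂ V)ˣ s with hc
  have hsum₁ : u₁ = c + a := by rw [hu₁, ha, hc, hA, hC, Finset.sum_inter_add_sum_sdiff]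
  have hsum₂ : u₂ = c + b := by
    rw [hu₂, hb, hc, hB, hC, Finset.inter_comm, Finset.sum_inter_add_sum_sdiff]
  have hcomm₁ : Commute c u₁ := by
    rw [hu₁]
    refine Commute.sum_left _ _ _ fun g hg => commute_of_sum_of fun s hs => ?_
    simp only [hC, Finset.mem_inter, Set.Finite.mem_toFinset, hmem₁] at hg hs ⊢
    exact ⟨hconj hs.1 (hRW hg.1.1).1, W₁.mul_mem (W₁.mul_mem hg.1.2 hs.2) (W₁.inv_mem hg.1.2)⟩
  have hcomm₂ : Commute c u₂ := by
    rw [hu₂]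
    refine Commute.sum_left _ _ _ fun g hg => commute_of_sum_of fun s hs => ?_
    simp only [hC, Finset.mem_inter, Set.Finite.mem_toFinset, hmem₂] at hg hs ⊢
    exact ⟨hconj hs.1 (hRW hg.2.1).1, W₂.mul_mem (W₂.mul_mem hg.2.2 hs.2) (W₂.inv_mem hg.2.2)⟩
  have hca : Commute c a := by
    rw [eq_sub_of_add_eq' hsum₁.symm]
    exact hcomm₁.sub_right (Commute.refl c)
  have hreduce : u₁ * u₂ = u₂ * u₁ ↔ Commute a b := by
    rw [← commute_iff_eq]
    constructor
    · intro h
      have hau : Commute a u₂ := by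
        rw [eq_sub_of_add_eq' hsum₁.symm]
        exact h.sub_left hcomm₂
      rw [eq_sub_of_add_eq' hsum₂.symm]
      exact hau.sub_right hca.symm
    · intro h
      rw [hsum₁]
      refine hcomm₂.add_left ?_
      rw [hsum₂]
      exact hca.symm.add_right h
  rw [hreduce]
  constructor
  · intro h s hs t ht
    obtain ⟨s', hs', t', ht', hmul⟩ := exists_mul_eq_of_commute_sum_of h
      (s := s) (t := t) (by simpa [hA] using hs) (by simpa [hB] using ht)
    replace hs' : s' ∈ R₁ \ R₂ := by simpa [hA] using hs'
    replace ht' : t' ∈ R₂ \ R₁ := by simpa [hB] using ht'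
    have hinv : ∀ {w}, w ∈ R → w⁻¹ = w := fun hw => inv_eq_of_mul_eq_one_left (horder _ hw)
    have hsR := (hmem₁.mp hs.1).1
    have hsR' := (hmem₁.mp hs'.1).1
    have htR := (hmem₂.mp ht.1).1
    have htR' := (hmem₂.mp ht'.1).1
    have hmul' : t * s = s' * t' := by
      have := congrArg (·⁻¹) hmul
      simpa only [mul_inv_rev, hinv hsR, hinv hsR', hinv htR, hinv htR'] using this
    have hss := hunique W₁ R₁ hR₁ hStein₁ s hs.1 s' hs'.1 t htR ht.2 t' htR' hmul
    have htt := hunique W₂ R₂ hR₂ hStein₂ t ht.1 t' ht'.1 s hsR hs.2 s' hsR' hmul'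
    rw [hmul, ← hss, ← htt]
  · intro h
    refine Commute.sum_left _ _ _ fun s hs => Commute.sum_right _ _ _ fun t ht => ?_
    rw [commute_iff_eq, ← map_mul, ← map_mul,
      h s (by simpa [hA] using hs) t (by simpa [hB] using ht)]
end

section
/- Let (G, G⁺, Δ) be a Garside structure. Let y, z ∈ G and u ∈ G⁺ with u⁻¹yu = z, and let y = a⁻¹b and z = c⁻¹d be the reduced left-fraction decompositions. Then the transport u^{(1)} = au ∧ bu satisfies u^{(1)} = auc⁻¹ = bud⁻¹ ∈ G⁺, and (u^{(1)})⁻¹ φ(y) u^{(1)} = φ(z). -/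
open scoped Pointwise Classical

/-- A Garside structure on a group `G`: a submonoid `pos` of positive elements with
trivial units, prefix and suffix lattice operations, and a Garside element `delta`. -/
structure GarsideStructure (G : Type*) [Group G] where
  /-- the submonoid of positive elements -/
  pos : Submonoid G
  /-- the Garside element Δ -/
  delta : G
  /-- meet for the prefix order -/
  meet : G → G → G
  /-- join for the prefix order -/
  join : G → G → G
  /-- meet for the suffix order -/
  rmeet : G → G → G
  /-- join for the suffix order -/
  rjoin : G → G → G
  units_triv : ∀ a : G, a ∈ pos → a⁻¹ ∈ pos → a = 1
  meet_le_left : ∀ a b : G, (meet a b)⁻¹ * a ∈ pos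
  meet_le_right : ∀ a b : G, (meet a b)⁻¹ * b ∈ pos
  le_meet : ∀ a b c : G, c⁻¹ * a ∈ pos → c⁻¹ * b ∈ pos → c⁻¹ * meet a b ∈ pos
  le_join_left : ∀ a b : G, a⁻¹ * join a b ∈ pos
  le_join_right : ∀ a b : G, b⁻¹ * join a b ∈ pos
  join_le : ∀ a b c : G, a⁻¹ * c ∈ pos → b⁻¹ * c ∈ pos → (join a b)⁻¹ * c ∈ pos
  rmeet_le_left : ∀ a b : G, a * (rmeet a b)⁻¹ ∈ pos
  rmeet_le_right : ∀ a b : G, b * (rmeet a b)⁻¹ ∈ pos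
  le_rmeet : ∀ a b c : G, a * c⁻¹ ∈ pos → b * c⁻¹ ∈ pos → rmeet a b * c⁻¹ ∈ pos
  rjoin_le_left : ∀ a b : G, rjoin a b * a⁻¹ ∈ pos
  rjoin_le_right : ∀ a b : G, rjoin a b * b⁻¹ ∈ pos
  rjoin_le : ∀ a b c : G, c * a⁻¹ ∈ pos → c * b⁻¹ ∈ pos → c * (rjoin a b)⁻¹ ∈ pos
  delta_pos : delta ∈ pos
  /-- Δ is balanced: its positive prefixes coincide with its positive suffixes -/
  delta_balanced : ∀ s : G, s ∈ pos → (s⁻¹ * delta ∈ pos ↔ delta * s⁻¹ ∈ pos)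
  /-- the set of simple elements (divisors of Δ) is finite -/
  divDelta_finite : {s : G | s ∈ pos ∧ s⁻¹ * delta ∈ pos}.Finite
  /-- the simple elements generate `G` -/
  divDelta_generates : Subgroup.closure {s : G | s ∈ pos ∧ s⁻¹ * delta ∈ pos} = ⊤
  /-- the atoms generate the positive monoid -/
  atoms_generate :
    Submonoid.closure {a : G | a ∈ pos ∧ a ≠ 1 ∧
      ∀ b ∈ pos, b⁻¹ * a ∈ pos → b = 1 ∨ b = a} = pos
  /-- every atom divides Δ -/
  atoms_divide_delta : ∀ a : G, a ∈ pos → a ≠ 1 →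
    (∀ b ∈ pos, b⁻¹ * a ∈ pos → b = 1 ∨ b = a) → a⁻¹ * delta ∈ pos
  /-- every element is bounded below and above by powers of Δ -/
  delta_bounds : ∀ x : G, ∃ p q : ℤ, p ≤ q ∧ (delta ^ p)⁻¹ * x ∈ pos ∧ x⁻¹ * delta ^ q ∈ pos
  /-- conjugation by Δ maps the positive monoid bijectively onto itself -/
  conj_delta : ∀ a : G, a ∈ pos ↔ delta * a * delta⁻¹ ∈ pos
  /-- some positive power of Δ is central -/
  central_power : ∃ n : ℕ, 0 < n ∧ delta ^ n ∈ Subgroup.center G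
  /-- no infinite strictly decreasing (for the prefix order) sequence of positive elements -/
  no_infinite_descent : ¬ ∃ f : ℕ → G, (∀ n, f n ∈ pos) ∧
    ∀ n, (f (n + 1))⁻¹ * f n ∈ pos ∧ f (n + 1) ≠ f n

namespace GarsideStructure

variable {G : Type*} [Group G] (S : GarsideStructure G)

/-- the prefix order: `a ≼ b` iff `a⁻¹ * b` is positive -/
def le (a b : G) : Prop := a⁻¹ * b ∈ S.pos

/-- the set of positive prefixes of an element -/
def Div (d : G) : Set G := {s : G | s ∈ S.pos ∧ S.le s d}

/-- atoms: nontrivial positive elements with no nontrivial proper positive prefix -/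
def IsAtomic (a : G) : Prop :=
  a ∈ S.pos ∧ a ≠ 1 ∧ ∀ b ∈ S.pos, S.le b a → b = 1 ∨ b = a

/-- the set of atoms -/
def atoms : Set G := {a : G | S.IsAtomic a}

/-- the left denominator of `x`: `D_L x = (1 ∧ x)⁻¹` -/
def DL (x : G) : G := (S.meet 1 x)⁻¹

/-- the left numerator of `x`: `N_L x = D_L x * x` -/
def NL (x : G) : G := S.DL x * x

/-- the (left) swap `φ(x) = N_L x * (D_L x)⁻¹ = D_L x * x * (D_L x)⁻¹` -/
def swap (x : G) : G := S.DL x * x * (S.DL x)⁻¹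

/-- an element is recurrent if it is fixed by some positive iterate of the swap map -/
def Recurrent (x : G) : Prop := ∃ m : ℕ, 0 < m ∧ S.swap^[m] x = x

/-- the set `R(x)` of recurrent conjugates of `x` -/
def Rset (x : G) : Set G := {y : G | IsConj x y ∧ S.Recurrent y}

/-- the set `C⁺(x)` of positive conjugates of `x` -/
def Cpos (x : G) : Set G := {y : G | IsConj x y ∧ y ∈ S.pos}

/-- the set `C⁻(x)` of negative conjugates of `x` -/
def Cneg (x : G) : Set G := {y : G | IsConj x y ∧ y⁻¹ ∈ S.pos}

/-- the transport of `u` at `y`: with `y = a⁻¹ b` reduced, `u^{(1)} = (a u) ∧ (b u)` -/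
def transport (y u : G) : G := S.meet (S.DL y * u) (S.NL y * u)

/-- `Δ_X`: the least upper bound for the prefix order of a set `X` (`1` if there is none) -/
noncomputable def deltaOf (X : Set G) : G :=
  if h : ∃ d : G, (∀ x ∈ X, S.le x d) ∧ ∀ c : G, (∀ x ∈ X, S.le x c) → S.le d c
  then h.choose else 1

/-- the closure `X̄ = Div(Δ_X) ∩ 𝒜` of a set of atoms -/
noncomputable def closureOf (X : Set G) : Set G := S.Div (S.deltaOf X) ∩ S.atoms

/-- the subgroup `G_X` generated by the closure of `X` -/
noncomputable def GX (X : Set G) : Subgroup G := Subgroup.closure (S.closureOf X)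

/-- the support of an element: the closure of the set of atoms appearing in atom
factorizations of its left denominator and left numerator -/
noncomputable def supp (x : G) : Set G :=
  if h : ∃ p : List G × List G,
      (∀ a ∈ p.1, a ∈ S.atoms) ∧ (∀ a ∈ p.2, a ∈ S.atoms) ∧
      p.1.prod = S.DL x ∧ p.2.prod = S.NL x
  then S.closureOf ({a : G | a ∈ h.choose.1} ∪ {a : G | a ∈ h.choose.2})
  else ∅

/-- an LCM-Garside structure -/
structure IsLCM : Prop where
  delta_eq : S.delta = S.deltaOf S.atoms
  balanced : ∀ X ⊆ S.atoms, ∀ s ∈ S.pos,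
    (S.le s (S.deltaOf X) ↔ S.deltaOf X * s⁻¹ ∈ S.pos)
  div_eq : ∀ X ⊆ S.atoms,
    S.Div (S.deltaOf X) = S.Div S.delta ∩ {g : G | g ∈ S.GX X ∧ g ∈ S.pos}
  factor_closed : ∀ X ⊆ S.atoms, ∀ g : G, g ∈ S.GX X → g ∈ S.pos →
    ∀ a b : G, a ∈ S.pos → b ∈ S.pos → g = a * b → a ∈ S.GX X ∧ b ∈ S.GX X
  lattice_closed : ∀ X ⊆ S.atoms, ∀ a b : G, a ∈ S.GX X → b ∈ S.GX X →
    S.meet a b ∈ S.GX X ∧ S.join a b ∈ S.GX X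
  fraction_closed : ∀ X ⊆ S.atoms, ∀ g : G, g ∈ S.GX X →
    S.DL g ∈ S.GX X ∧ S.NL g ∈ S.GX X

/-- a standard parabolic subgroup: the subgroup generated by a saturated set of atoms -/
noncomputable def IsStandardParabolic (H : Subgroup G) : Prop :=
  ∃ X : Set G, X ⊆ S.atoms ∧ S.closureOf X = X ∧ H = S.GX X

/-- a parabolic subgroup: a conjugate of a standard parabolic subgroup -/
noncomputable def IsParabolic (H : Subgroup G) : Prop :=
  ∃ (P : Subgroup G) (c : G), S.IsStandardParabolic P ∧
    H = Subgroup.map (MulAut.conj c).toMonoidHom P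

/-- the structure is support-preserving if conjugations between positive elements
conjugate the corresponding parabolic subgroups of the supports -/
noncomputable def SupportPreserving : Prop :=
  ∀ y ∈ S.pos, ∀ z ∈ S.pos, ∀ α : G, α⁻¹ * y * α = z →
    Subgroup.map (MulAut.conj α⁻¹).toMonoidHom (S.GX (S.supp y)) = S.GX (S.supp z)

/-- `P` is the parabolic closure of `x` -/
noncomputable def IsParabolicClosure (x : G) (P : Subgroup G) : Prop :=
  S.IsParabolic P ∧ x ∈ P ∧ ∀ H : Subgroup G, S.IsParabolic H → x ∈ H → P ≤ H

end GarsideStructure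


namespace GarsideStructure

variable {G : Type*} [Group G] (S : GarsideStructure G)

/-- The prefix order is antisymmetric. -/
theorem le_antisymm {a b : G} (hab : a⁻¹ * b ∈ S.pos) (hba : b⁻¹ * a ∈ S.pos) : a = b :=
  inv_mul_eq_one.mp (S.units_triv _ hab (by simpa using hba))

/-- Left translations preserve meets for the prefix order. -/
theorem mul_meet (g a b : G) : S.meet (g * a) (g * b) = g * S.meet a b := by
  apply S.le_antisymm
  · have h := S.le_meet a b (g⁻¹ * S.meet (g * a) (g * b))
      (by simpa [mul_assoc] using S.meet_le_left (g * a) (g * b))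
      (by simpa [mul_assoc] using S.meet_le_right (g * a) (g * b))
    simpa [mul_assoc] using h
  · apply S.le_meet
    · simpa [mul_assoc] using S.meet_le_left a b
    · simpa [mul_assoc] using S.meet_le_right a b

/-- A meet of positive elements is positive. -/
theorem meet_mem_pos {a b : G} (ha : a ∈ S.pos) (hb : b ∈ S.pos) : S.meet a b ∈ S.pos := by
  simpa using S.le_meet a b 1 (by simpa using ha) (by simpa using hb)

theorem DL_mem_pos (x : G) : S.DL x ∈ S.pos := by
  simpa [DL] using S.meet_le_left 1 x

theorem NL_mem_pos (x : G) : S.NL x ∈ S.pos := S.meet_le_right 1 x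

end GarsideStructure

/-- definition and basic properties of the transport. If `u` is positive,
`u⁻¹ y u = z`, and `y = a⁻¹b`, `z = c⁻¹d` are the reduced left-fraction decompositions,
then `u⁽¹⁾ = au ∧ bu` is positive, equals `auc⁻¹ = bud⁻¹`, and conjugates `φ(y)` to `φ(z)`. -/
theorem garside_transport_basic {G : Type*} [Group G]
    (S : GarsideStructure G) (y z u : G) (hu : u ∈ S.pos)
    (hconj : u⁻¹ * y * u = z) :
    S.transport y u ∈ S.pos ∧
    S.transport y u = S.DL y * u * (S.DL z)⁻¹ ∧
    S.transport y u = S.NL y * u * (S.NL z)⁻¹ ∧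
    (S.transport y u)⁻¹ * S.swap y * S.transport y u = S.swap z := by
  subst hconj
  have htransport : S.transport y u = S.DL y * u * (S.DL (u⁻¹ * y * u))⁻¹ := by
    rw [GarsideStructure.DL.eq_def S (u⁻¹ * y * u), inv_inv, ← S.mul_meet]
    simp [GarsideStructure.transport, GarsideStructure.NL, mul_assoc]
  refine ⟨S.meet_mem_pos (mul_mem (S.DL_mem_pos y) hu) (mul_mem (S.NL_mem_pos y) hu),
    htransport, ?_, ?_⟩
  · rw [htransport]
    simp only [GarsideStructure.NL]
    group
  · rw [htransport]
    simp only [GarsideStructure.swap]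
    group
end
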